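/- arXiv:1406.0969 — 2 statements merged into one kernel-verified Lean document; each statement's English description precedes it below -/
import Mathlib

section
/- For every real x with |x| > 1: 2·∫_{−1}^1 log|x−t|·ψ(t) dt − π|x| < −2 − 2·log 2 (the strict Euler–Lagrange inequality off the support for the equilibrium measure ψ(t)dt in the external field π|t|). -/
open MeasureTheory Real

/-- The equilibrium density `ψ(x) = (1/π) log((1+√(1-x²))/|x|)`. -/
noncomputable def psiDens (x : ℝ) : ℝ :=
  (1 / π) * Real.log ((1 + Real.sqrt (1 - x ^ 2)) / |x|)

/-!
The measure `ψ(t) dt` is the projection to the real axis of the rotation invariant measure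
`dx dy / (2π|z|)` on the unit disc: the integral of `1/|z|` along the vertical chord at `t` is
`2 arsinh (√(1-t²)/|t|) = 2π ψ(t)`. Hence, in polar coordinates, `∫ f ψ` is the integral over
`r ∈ [0, 1]` of the averages of `f ∘ re` over the circles of radius `r`. For `f = log |x - ·|` with
`x > 1`, Jensen's formula gives the average `log ((x + √(x²-r²))/2)`. Integrating over `r`, the
potential is `arcosh x + x arcsin x⁻¹ - 1 - log 2`, so the claim reads `arcosh x < x arccos x⁻¹`.
The difference of the two sides vanishes at `1` and has derivative `arccos x⁻¹ > 0`.
-/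

open Set Metric Module

section Disc

variable {E : Type*} [NormedAddCommGroup E] [NormedSpace ℝ E]

theorem locallyIntegrable_inv_norm {V : Type*} [NormedAddCommGroup V] [NormedSpace ℝ V]
    [FiniteDimensional ℝ V] [MeasurableSpace V] [BorelSpace V] (μ : Measure V)
    [μ.IsAddHaarMeasure] (hV : 1 < finrank ℝ V) :
    LocallyIntegrable (fun v : V ↦ ‖v‖⁻¹) μ :=
  locallyIntegrable_of_norm_le_rpow (C := 1) (α := 1) hV.le (mod_cast hV)
    (.of_forall fun v ↦ by simp [rpow_neg_one]) (by fun_prop)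

theorem integrableOn_closedBall_inv_norm_smul {f : ℂ → E} {R : ℝ}
    (hf : ContinuousOn f (closedBall 0 R)) :
    IntegrableOn (fun z : ℂ ↦ ‖z‖⁻¹ • f z) (closedBall 0 R) :=
  ((locallyIntegrable_inv_norm volume (by simp)).integrableOn_isCompact
    (isCompact_closedBall 0 R)).smul_continuousOn hf (isCompact_closedBall 0 R)

theorem circleAverage_eq_integral_neg_pi_pi (f : ℂ → E) (c : ℂ) (r : ℝ) :
    circleAverage f c r = (2 * π)⁻¹ • ∫ θ in -π..π, f (circleMap c r θ) := by
  rw [circleAverage_eq_integral_add (-π),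
    intervalIntegral.integral_comp_add_right (fun θ ↦ f (circleMap c r θ))]
  ring_nf

theorem integral_closedBall_inv_norm_smul_eq_circleAverage {f : ℂ → E} {R : ℝ} (hR : 0 ≤ R)
    (hf : ContinuousOn f (closedBall 0 R)) :
    ∫ z in closedBall 0 R, ‖z‖⁻¹ • f z = (2 * π) • ∫ r in 0..R, circleAverage f 0 r := by
  have hcirc (p : ℝ × ℝ) : Complex.polarCoord.symm p = circleMap 0 p.1 p.2 := by
    simp [circleMap, Complex.exp_mul_I]
  have hint : IntegrableOn (fun p : ℝ × ℝ ↦ f (circleMap 0 p.1 p.2)) (Ioc 0 R ×ˢ Ioo (-π) π) := by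
    have hcont : ContinuousOn (fun p : ℝ × ℝ ↦ f (circleMap 0 p.1 p.2)) (Icc 0 R ×ˢ Icc (-π) π) :=
      hf.comp circleMap.continuous.continuousOn fun p hp ↦ by
        simpa [abs_of_nonneg hp.1.1] using hp.1.2
    exact (hcont.integrableOn_compact (isCompact_Icc.prod isCompact_Icc)).mono_set
      (prod_mono Ioc_subset_Icc_self Ioo_subset_Icc_self)
  calc ∫ z in closedBall 0 R, ‖z‖⁻¹ • f z
  _ = ∫ p in Ioi (0 : ℝ) ×ˢ Ioo (-π) π,
        (Iic R ×ˢ univ).indicator (fun p ↦ f (circleMap 0 p.1 p.2)) p := by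
    rw [← integral_indicator measurableSet_closedBall, ← Complex.integral_comp_polarCoord_symm]
    refine setIntegral_congr_fun (measurableSet_Ioi.prod measurableSet_Ioo) fun p hp ↦ ?_
    have hp₀ : 0 < p.1 := hp.1
    by_cases hpR : p.1 ≤ R <;>
      simp [hcirc, indicator, abs_of_pos hp₀, hpR, smul_smul, hp₀.ne']
  _ = ∫ p in Ioc 0 R ×ˢ Ioo (-π) π, f (circleMap 0 p.1 p.2) := by
    rw [setIntegral_indicator (measurableSet_Iic.prod MeasurableSet.univ), prod_inter_prod,
      Ioi_inter_Iic, inter_univ]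
  _ = ∫ r in Ioc 0 R, ∫ θ in Ioo (-π) π, f (circleMap 0 r θ) := setIntegral_prod _ hint
  _ = (2 * π) • ∫ r in 0..R, circleAverage f 0 r := by
    simp_rw [circleAverage_eq_integral_neg_pi_pi, intervalIntegral.integral_smul,
      intervalIntegral.integral_of_le hR,
      intervalIntegral.integral_of_le (neg_le_self pi_nonneg), integral_Ioc_eq_integral_Ioo]
    rw [smul_inv_smul₀ (by positivity)]

theorem mk_mem_closedBall_zero_iff {x y R : ℝ} (hR : 0 ≤ R) :
    (⟨x, y⟩ : ℂ) ∈ closedBall 0 R ↔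
      x ∈ Icc (-R) R ∧ y ∈ Icc (-√(R ^ 2 - x ^ 2)) √(R ^ 2 - x ^ 2) := by
  have hball : (⟨x, y⟩ : ℂ) ∈ closedBall 0 R ↔ x ^ 2 + y ^ 2 ≤ R ^ 2 := by
    rw [mem_closedBall_zero_iff, ← sq_le_sq₀ (norm_nonneg _) hR, Complex.sq_norm,
      Complex.normSq_mk, ← sq, ← sq]
  rw [hball, mem_Icc, mem_Icc, ← abs_le, ← abs_le, ← sq_le_sq₀ (abs_nonneg x) hR, sq_abs]
  constructor
  · intro h
    exact ⟨by linarith [sq_nonneg y], abs_le_sqrt (by linarith)⟩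
  · rintro ⟨hx, hy⟩
    rw [le_sqrt (abs_nonneg y) (sub_nonneg.2 hx), sq_abs] at hy
    linarith

theorem integral_closedBall_eq_integral_chord {f : ℂ → E} {R : ℝ} (hR : 0 ≤ R)
    (hf : IntegrableOn f (closedBall 0 R)) :
    ∫ z in closedBall 0 R, f z =
      ∫ x in -R..R, ∫ y in -√(R ^ 2 - x ^ 2)..√(R ^ 2 - x ^ 2), f ⟨x, y⟩ := by
  have hprod : Integrable (fun p : ℝ × ℝ ↦ (closedBall 0 R).indicator f ⟨p.1, p.2⟩)
      (volume.prod volume) :=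
    Complex.volume_preserving_equiv_real_prod.symm.integrable_comp_of_integrable
      (hf.integrable_indicator measurableSet_closedBall)
  calc ∫ z in closedBall 0 R, f z
  _ = ∫ p : ℝ × ℝ, (closedBall 0 R).indicator f ⟨p.1, p.2⟩ := by
    rw [← integral_indicator measurableSet_closedBall]
    exact (Complex.volume_preserving_equiv_real_prod.symm.integral_comp' _).symm
  _ = ∫ x, ∫ y, (closedBall 0 R).indicator f ⟨x, y⟩ := integral_prod _ hprod
  _ = ∫ x, (Icc (-R) R).indicator
        (fun x ↦ ∫ y in Icc (-√(R ^ 2 - x ^ 2)) √(R ^ 2 - x ^ 2), f ⟨x, y⟩) x := by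
    congr with x
    by_cases hx : x ∈ Icc (-R) R
    · simp only [indicator_of_mem hx, ← integral_indicator measurableSet_Icc]
      simp only [indicator, mk_mem_closedBall_zero_iff hR, hx, true_and]
    · simp [indicator, mk_mem_closedBall_zero_iff hR, hx]
  _ = ∫ x in -R..R, ∫ y in -√(R ^ 2 - x ^ 2)..√(R ^ 2 - x ^ 2), f ⟨x, y⟩ := by
    simp_rw [integral_indicator measurableSet_Icc, integral_Icc_eq_integral_Ioc,
      intervalIntegral.integral_of_le (neg_le_self hR),
      intervalIntegral.integral_of_le (neg_le_self (sqrt_nonneg _))]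

theorem integral_inv_sqrt_sq_add_sq {x : ℝ} (hx : x ≠ 0) (a : ℝ) :
    ∫ y in -a..a, (√(x ^ 2 + y ^ 2))⁻¹ = 2 * arsinh (a / |x|) := by
  have hderiv (y : ℝ) : HasDerivAt (fun y ↦ arsinh (y / |x|)) (√(x ^ 2 + y ^ 2))⁻¹ y := by
    refine ((hasDerivAt_id y).div_const |x|).arsinh.congr_deriv ?_
    have hsqrt : √(x ^ 2 + y ^ 2) = |x| * √(1 + (y / |x|) ^ 2) := by
      rw [← sqrt_sq_eq_abs, ← sqrt_mul (sq_nonneg x), sqrt_sq_eq_abs, div_pow, sq_abs]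
      field_simp
    simp [hsqrt, mul_comm]
  rw [intervalIntegral.integral_eq_sub_of_hasDerivAt fun y _ ↦ hderiv y]
  · rw [neg_div, arsinh_neg]
    ring
  · refine (Continuous.inv₀ (by fun_prop) fun y ↦ ?_).intervalIntegrable _ _
    positivity

theorem integral_arsinh_smul_eq_integral_circleAverage [CompleteSpace E] {f : ℝ → E} {R : ℝ}
    (hR : 0 ≤ R) (hf : ContinuousOn f (Icc (-R) R)) :
    ∫ x in -R..R, arsinh (√(R ^ 2 - x ^ 2) / |x|) • f x =
      π • ∫ r in 0..R, circleAverage (fun z ↦ f z.re) 0 r := by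
  have hdisc : ContinuousOn (fun z : ℂ ↦ f z.re) (closedBall 0 R) :=
    hf.comp Complex.continuous_re.continuousOn fun z hz ↦
      abs_le.1 ((Complex.abs_re_le_norm z).trans (mem_closedBall_zero_iff.1 hz))
  have hchord : ∀ᵐ x : ℝ, ∫ y in -√(R ^ 2 - x ^ 2)..√(R ^ 2 - x ^ 2),
      ‖(⟨x, y⟩ : ℂ)‖⁻¹ • f x =
        (2 * arsinh (√(R ^ 2 - x ^ 2) / |x|)) • f x := by
    filter_upwards [compl_mem_ae_iff.2 (measure_singleton 0)] with x hx
    simp_rw [← integral_inv_sqrt_sq_add_sq hx, Complex.mk_eq_add_mul_I, Complex.norm_add_mul_I]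
    rw [intervalIntegral.integral_smul_const]
  have hdouble : (2 : ℝ) • ∫ x in -R..R, arsinh (√(R ^ 2 - x ^ 2) / |x|) • f x =
      (2 : ℝ) • π • ∫ r in 0..R, circleAverage (fun z ↦ f z.re) 0 r := by
    rw [smul_smul, ← integral_closedBall_inv_norm_smul_eq_circleAverage hR hdisc,
      integral_closedBall_eq_integral_chord hR (integrableOn_closedBall_inv_norm_smul hdisc),
      ← intervalIntegral.integral_smul]
    simp_rw [smul_smul]
    exact (intervalIntegral.integral_congr_ae (hchord.mono fun x hx _ ↦ hx)).symm
  exact smul_right_injective E two_ne_zero hdouble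

theorem psiDens_eq_arsinh {x : ℝ} (hx : |x| ≤ 1) :
    psiDens x = π⁻¹ * arsinh (√(1 - x ^ 2) / |x|) := by
  rcases eq_or_ne x 0 with rfl | hx₀
  · simp [psiDens]
  have hs : √(1 - x ^ 2) ^ 2 = 1 - x ^ 2 :=
    sq_sqrt (sub_nonneg.2 ((sq_le_one_iff_abs_le_one x).2 hx))
  have hcosh : √(1 + (√(1 - x ^ 2) / |x|) ^ 2) = 1 / |x| := by
    rw [div_pow, hs, sq_abs, show 1 + (1 - x ^ 2) / x ^ 2 = (1 / x) ^ 2 by field_simp; ring,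
      sqrt_sq_eq_abs, abs_div, abs_one]
  rw [psiDens, arsinh, hcosh, one_div π, ← add_div, add_comm]

theorem integral_psiDens_smul_eq_integral_circleAverage [CompleteSpace E] {f : ℝ → E}
    (hf : ContinuousOn f (Icc (-1) 1)) :
    ∫ x in (-1)..1, psiDens x • f x = ∫ r in 0..1, circleAverage (fun z ↦ f z.re) 0 r := by
  have hψ : ∫ x in (-1)..1, psiDens x • f x =
      π⁻¹ • ∫ x in (-1)..1, arsinh (√(1 ^ 2 - x ^ 2) / |x|) • f x := by
    rw [← intervalIntegral.integral_smul]
    refine intervalIntegral.integral_congr fun x hx ↦ ?_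
    rw [uIcc_of_le (by norm_num)] at hx
    simp only [psiDens_eq_arsinh (abs_le.2 hx), one_pow, smul_smul]
  rw [hψ, integral_arsinh_smul_eq_integral_circleAverage zero_le_one hf,
    inv_smul_smul₀ pi_ne_zero]

end Disc

theorem circleAverage_log_abs_sub_re {x v : ℝ} (hx : 0 < x) (hv : |v| ≤ x) :
    circleAverage (fun z ↦ log |x - z.re|) 0 v = log ((x + √(x ^ 2 - v ^ 2)) / 2) := by
  -- For `a² = (x + s)/2` and `b² = (x - s)/2`, `x - v cos θ` factors as `‖a exp (iθ) - b‖²`.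
  set s := √(x ^ 2 - v ^ 2)
  have hs : s ^ 2 = x ^ 2 - v ^ 2 :=
    sq_sqrt (sub_nonneg.2 (sq_le_sq' (abs_le.1 hv).1 (abs_le.1 hv).2))
  have hs₀ : 0 ≤ s := sqrt_nonneg _
  set a := √((x + s) / 2)
  have ha : 0 < a := by positivity
  have ha2 : a ^ 2 = (x + s) / 2 := sq_sqrt (by positivity)
  set b := v / (2 * a)
  have hb2 : b ^ 2 = (x - s) / 2 := by
    rw [div_pow, mul_pow, ha2]
    field_simp
    linarith
  have hab : 2 * a * b = v := by simp only [b]; field_simp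
  have hfac (θ : ℝ) : |x - (circleMap 0 v θ).re| = ‖circleMap 0 a θ - b‖ ^ 2 := by
    have h : ‖circleMap 0 a θ - b‖ ^ 2 = x - (circleMap 0 v θ).re := by
      rw [← Complex.normSq_eq_norm_sq, Complex.normSq_apply]
      simp only [circleMap, zero_add, Complex.sub_re, Complex.mul_re, Complex.ofReal_re,
        Complex.exp_ofReal_mul_I_re, Complex.ofReal_im, Complex.exp_ofReal_mul_I_im, zero_mul,
        sub_zero, Complex.sub_im, Complex.mul_im, add_zero]
      linear_combination a ^ 2 * sin_sq_add_cos_sq θ - cos θ * hab + ha2 + hb2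
    rw [← h, abs_of_nonneg (sq_nonneg _)]
  have hmem : (b : ℂ) ∈ closedBall 0 |a| := by
    simpa using sq_le_sq.1 (by linarith : b ^ 2 ≤ a ^ 2)
  calc circleAverage (fun z ↦ log |x - z.re|) 0 v
  _ = circleAverage (fun z ↦ (2 : ℝ) • log ‖z - b‖) 0 a := by
    simp [circleAverage, hfac]
  _ = log (a ^ 2) := by
    rw [circleAverage_fun_smul, circleAverage_log_norm_sub_const_of_mem_closedBall hmem, log_pow]
    simp
  _ = _ := by rw [ha2]

theorem sqrt_one_sub_div_sq {x : ℝ} (hx : 0 < x) (v : ℝ) :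
    √(1 - (v / x) ^ 2) = √(x ^ 2 - v ^ 2) / x := by
  rw [show 1 - (v / x) ^ 2 = (x ^ 2 - v ^ 2) / x ^ 2 by field_simp, sqrt_div' _ (sq_nonneg x),
    sqrt_sq hx.le]

theorem hasDerivAt_primitive_log_add_sqrt_sq_sub_sq {x v : ℝ} (hv : |v| < x) :
    HasDerivAt (fun v ↦ v * log ((x + √(x ^ 2 - v ^ 2)) / 2) + x * arcsin (v / x) - v)
      (log ((x + √(x ^ 2 - v ^ 2)) / 2)) v := by
  have hx : 0 < x := (abs_nonneg v).trans_lt hv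
  have hsq : 0 < x ^ 2 - v ^ 2 := sub_pos.2 (sq_lt_sq.2 (by rwa [abs_of_pos hx]))
  have hvx := abs_lt.1 (show |v / x| < 1 by rwa [abs_div, abs_of_pos hx, div_lt_one hx])
  have hlog := ((((hasDerivAt_pow 2 v).const_sub (x ^ 2)).sqrt hsq.ne').const_add x).div_const 2
    |>.log (by positivity)
  have harcsin := (hasDerivAt_arcsin hvx.1.ne' hvx.2.ne).comp v ((hasDerivAt_id v).div_const x)
  refine ((((hasDerivAt_id v).mul hlog).add (harcsin.const_mul x)).sub
    (hasDerivAt_id v)).congr_deriv ?_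
  have hs := sq_sqrt hsq.le
  have hs₀ := sqrt_pos.2 hsq
  simp only [sqrt_one_sub_div_sq hx, id]
  set s := √(x ^ 2 - v ^ 2)
  have : x + s ≠ 0 := by positivity
  field_simp
  push_cast
  linear_combination -2 * hs

theorem integral_log_add_sqrt_sq_sub_sq {x r : ℝ} (hr : |r| < x) :
    ∫ v in 0..r, log ((x + √(x ^ 2 - v ^ 2)) / 2) =
      r * log ((x + √(x ^ 2 - r ^ 2)) / 2) + x * arcsin (r / x) - r := by
  have hx : 0 < x := (abs_nonneg r).trans_lt hr
  have hbound : ∀ v ∈ uIcc 0 r, |v| < x := fun v hv ↦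
    (by simpa using abs_sub_left_of_mem_uIcc hv : |v| ≤ |r|).trans_lt hr
  rw [intervalIntegral.integral_eq_sub_of_hasDerivAt fun v hv ↦
    hasDerivAt_primitive_log_add_sqrt_sq_sub_sq (hbound v hv)]
  · simp
  · refine (Continuous.log (by fun_prop) fun v ↦ ?_).intervalIntegrable _ _
    positivity

theorem integral_log_abs_sub_mul_psiDens {x : ℝ} (hx : 1 < x) :
    ∫ t in (-1)..1, log |x - t| * psiDens t = arcosh x + x * arcsin x⁻¹ - 1 - log 2 := by
  have hcont : ContinuousOn (fun t ↦ log |x - t|) (Icc (-1) 1) :=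
    ContinuousOn.log (by fun_prop) fun t ht ↦ abs_ne_zero.2 (sub_ne_zero.2 (ht.2.trans_lt hx).ne')
  calc ∫ t in (-1)..1, log |x - t| * psiDens t
  _ = ∫ v in 0..1, circleAverage (fun z ↦ log |x - z.re|) 0 v := by
    simp only [← integral_psiDens_smul_eq_integral_circleAverage hcont, smul_eq_mul, mul_comm]
  _ = ∫ v in 0..1, log ((x + √(x ^ 2 - v ^ 2)) / 2) := by
    refine intervalIntegral.integral_congr fun v hv ↦ ?_
    rw [uIcc_of_le zero_le_one] at hv
    exact circleAverage_log_abs_sub_re (by linarith) (by rw [abs_of_nonneg hv.1]; linarith [hv.2])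
  _ = log ((x + √(x ^ 2 - 1)) / 2) + x * arcsin x⁻¹ - 1 := by
    rw [integral_log_add_sqrt_sq_sub_sq (by simpa)]
    simp
  _ = arcosh x + x * arcsin x⁻¹ - 1 - log 2 := by
    rw [log_div (by positivity) two_ne_zero, arcosh]
    ring

theorem hasDerivAt_mul_arccos_inv {x : ℝ} (hx : 1 < x) :
    HasDerivAt (fun x ↦ x * arccos x⁻¹) (arccos x⁻¹ + (√(x ^ 2 - 1))⁻¹) x := by
  have hx₀ : 0 < x := by linarith
  have hs₀ : 0 < √(x ^ 2 - 1) := sqrt_pos.2 (by nlinarith)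
  have hsqrt : √(1 - x⁻¹ ^ 2) = √(x ^ 2 - 1) / x := by
    simpa using sqrt_one_sub_div_sq hx₀ 1
  have harccos := (hasDerivAt_arccos (by linarith [inv_pos.2 hx₀])
    (inv_lt_one_of_one_lt₀ hx).ne).comp x (hasDerivAt_inv hx₀.ne')
  refine ((hasDerivAt_id x).mul harccos).congr_deriv ?_
  simp only [hsqrt, id, Function.comp]
  field_simp

theorem arcosh_lt_mul_arccos_inv {x : ℝ} (hx : 1 < x) : arcosh x < x * arccos x⁻¹ := by
  have hmono : StrictMonoOn (fun x ↦ x * arccos x⁻¹ - arcosh x) (Ici 1) := by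
    refine strictMonoOn_of_hasDerivWithinAt_pos (f' := fun x ↦ arccos x⁻¹) (convex_Ici 1) ?_
      (fun y hy ↦ ?_) fun y hy ↦ ?_
    · have hne : ∀ y ∈ Ici (1 : ℝ), y ≠ 0 := fun y hy ↦ (zero_lt_one.trans_le hy).ne'
      exact (continuousOn_id.mul (continuous_arccos.comp_continuousOn
        (continuousOn_id.inv₀ hne))).sub continuousOn_arcosh
    · rw [interior_Ici] at hy
      exact (((hasDerivAt_mul_arccos_inv hy).sub (hasDerivAt_arcosh hy)).congr_deriv
        (add_sub_cancel_right _ _)).hasDerivWithinAt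
    · rw [interior_Ici] at hy
      exact arccos_pos.2 (inv_lt_one_of_one_lt₀ hy)
  have := hmono self_mem_Ici hx.le hx
  simpa using this

theorem integral_log_abs_abs_sub_mul {g : ℝ → ℝ} (hg : Function.Even g) (a x : ℝ) :
    ∫ t in -a..a, log |(|x|) - t| * g t = ∫ t in -a..a, log |x - t| * g t := by
  rcases abs_choice x with h | h <;> rw [h]
  have hneg := intervalIntegral.integral_comp_neg (a := -a) (b := a) fun t ↦ log |x - t| * g t
  rw [neg_neg] at hneg
  rw [← hneg]
  congr with t
  rw [hg, ← abs_neg, neg_sub', neg_neg]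

theorem psiDens_even : Function.Even psiDens := fun t ↦ by simp [psiDens]

/-- **Strict Euler–Lagrange inequality off the support.**
For every real `x` with `|x| > 1`:
`2 ∫_{-1}^1 log|x-t| ψ(t) dt - π|x| < -2 - 2 log 2`. -/
theorem euler_lagrange_off_support (x : ℝ) (hx : 1 < |x|) :
    2 * (∫ t in (-1 : ℝ)..1, Real.log |x - t| * psiDens t) - π * |x| <
      -2 - 2 * Real.log 2 := by
  rw [← integral_log_abs_abs_sub_mul psiDens_even, integral_log_abs_sub_mul_psiDens hx]
  have h := arcosh_lt_mul_arccos_inv hx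
  rw [arccos] at h
  linarith
end

section
/- For every x ∈ (−1,1): lim_{ε→0+} ( g(x+iε) − g(x−iε) ) = 2πi·∫_x^1 ψ(s) ds, and for every real x < −1: lim_{ε→0+} ( g(x+iε) − g(x−iε) ) = 2πi, while for every real x > 1: lim_{ε→0+} ( g(x+iε) − g(x−iε) ) = 0. -/
open MeasureTheory Filter Real Topology

/-- The `g`-function `g(z) = ∫_{-1}^1 Log(z-x) ψ(x) dx` (principal logarithm). -/
noncomputable def gFun (z : ℂ) : ℂ :=
  ∫ x in (-1 : ℝ)..1, Complex.log (z - x) * (psiDens x : ℂ)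

/-! For `z` in the upper half-plane `Log z - Log (conj z) = 2i arg z`. Hence `g(x + iε) - g(x - iε)`
integrates `2i arg(x - s + iε)` against the density; as `ε → 0+` this kernel tends to `2πi` for
`s > x` and to `0` for `s < x`, and it is bounded by `2π`, so dominated convergence applies.
The value `2πi` to the left of the support is the total mass of `ψ`, computed from the primitive
`π⁻¹ (t log (1 + √(1 - t²)) - t log t + arcsin t)`. -/

section LogJump

open Complex ComplexConjugate

lemma log_sub_log_conj {z : ℂ} (hz : z.arg ≠ π) :
    Complex.log z - Complex.log (conj z) = 2 * z.arg * I := by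
  rw [log_conj z hz, Complex.sub_conj, log_im]
  push_cast
  rfl

/-- The difference of the principal logarithms at height `ε` above and below the real point `y`. -/
noncomputable def logJump (ε y : ℝ) : ℂ :=
  Complex.log (y + ε * I) - Complex.log (y - ε * I)

lemma measurable_logJump (ε : ℝ) : Measurable (logJump ε) := by
  unfold logJump
  fun_prop

lemma logJump_eq_arg {ε : ℝ} (hε : ε ≠ 0) (y : ℝ) : logJump ε y = 2 * arg (y + ε * I) * I := by
  have hconj : (y - ε * I : ℂ) = conj (y + ε * I) := by simp [sub_eq_add_neg]
  have harg : arg (y + ε * I) ≠ π := fun h ↦ hε (by simpa using (arg_eq_pi_iff.1 h).2)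
  rw [logJump, hconj, log_sub_log_conj harg]

lemma norm_logJump_le {ε : ℝ} (hε : ε ≠ 0) (y : ℝ) : ‖logJump ε y‖ ≤ 2 * π := by
  rw [logJump_eq_arg hε]
  simpa using abs_arg_le_pi (y + ε * I)

lemma tendsto_add_mul_I (y : ℝ) :
    Tendsto (fun ε : ℝ ↦ (y + ε * I : ℂ)) (𝓝[>] 0) (𝓝[{z | 0 ≤ z.im}] y) := by
  refine tendsto_nhdsWithin_iff.2 ⟨?_, ?_⟩
  · have hcont : Continuous fun ε : ℝ ↦ (y + ε * I : ℂ) := by fun_prop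
    exact (hcont.tendsto' 0 y (by simp)).mono_left nhdsWithin_le_nhds
  · filter_upwards [self_mem_nhdsWithin] with ε hε
    simpa using (Set.mem_Ioi.1 hε).le

lemma tendsto_arg_add_mul_I_of_neg {y : ℝ} (hy : y < 0) :
    Tendsto (fun ε : ℝ ↦ arg (y + ε * I)) (𝓝[>] 0) (𝓝 π) :=
  (tendsto_arg_nhdsWithin_im_nonneg_of_re_neg_of_im_zero (by simpa using hy) (by simp)).comp
    (tendsto_add_mul_I y)

lemma tendsto_arg_add_mul_I_of_pos {y : ℝ} (hy : 0 < y) :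
    Tendsto (fun ε : ℝ ↦ arg (y + ε * I)) (𝓝[>] 0) (𝓝 0) := by
  have hcont : ContinuousAt arg y := continuousAt_arg (Or.inl (by simpa using hy))
  have hlim := hcont.tendsto.comp ((tendsto_add_mul_I y).mono_right nhdsWithin_le_nhds)
  rwa [arg_ofReal_of_nonneg hy.le] at hlim

lemma tendsto_logJump {y : ℝ} (hy : y ≠ 0) :
    Tendsto (fun ε : ℝ ↦ logJump ε y) (𝓝[>] 0)
      (𝓝 ((Set.Iio 0).indicator (fun _ ↦ 2 * π * I) y)) := by
  have tendsto_of_arg {θ : ℝ} (hθ : Tendsto (fun ε : ℝ ↦ arg (y + ε * I)) (𝓝[>] 0) (𝓝 θ)) :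
      Tendsto (fun ε : ℝ ↦ logJump ε y) (𝓝[>] 0) (𝓝 (2 * θ * I)) := by
    refine ((hθ.ofReal.const_mul 2).mul_const I).congr' ?_
    filter_upwards [self_mem_nhdsWithin] with ε hε
    exact (logJump_eq_arg (Set.mem_Ioi.1 hε).ne' y).symm
  rcases hy.lt_or_gt with hneg | hpos
  · simpa [hneg] using tendsto_of_arg (tendsto_arg_add_mul_I_of_neg hneg)
  · simpa [hpos.le] using tendsto_of_arg (tendsto_arg_add_mul_I_of_pos hpos)

end LogJump

section LogPotential

/-- The complex logarithmic potential `z ↦ ∫ Log(z - s) f(s) dμ(s)` of a density `f` with respect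
to a measure `μ` on the line, with the principal logarithm. -/
noncomputable def logPotential (μ : Measure ℝ) (f : ℝ → ℂ) (z : ℂ) : ℂ :=
  ∫ s, Complex.log (z - s) * f s ∂μ

lemma continuous_log_sub_ofReal {z : ℂ} (hz : z.im ≠ 0) :
    Continuous fun s : ℝ ↦ Complex.log (z - s) :=
  Continuous.clog (by fun_prop) fun s ↦ Or.inr (by simpa using hz)

variable {μ : Measure ℝ} {f : ℝ → ℂ}

lemma logPotential_sub_logPotential (x : ℝ) {ε : ℝ} (hε : ε ≠ 0)
    (hlog : ∀ z : ℂ, z.im ≠ 0 → Integrable (fun s : ℝ ↦ Complex.log (z - s) * f s) μ) :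
    logPotential μ f (x + ε * Complex.I) - logPotential μ f (x - ε * Complex.I) =
      ∫ s, logJump ε (x - s) * f s ∂μ := by
  rw [logPotential, logPotential, ← integral_sub (hlog _ (by simpa using hε))
    (hlog _ (by simpa using hε))]
  refine integral_congr_ae (Eventually.of_forall fun s ↦ ?_)
  simp only [logJump, Complex.ofReal_sub, sub_mul]
  ring_nf

lemma tendsto_integral_logJump_mul {x : ℝ} (hf : Integrable f μ) (hx : μ {x} = 0) :
    Tendsto (fun ε : ℝ ↦ ∫ s, logJump ε (x - s) * f s ∂μ) (𝓝[>] 0)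
      (𝓝 (2 * π * Complex.I * ∫ s in Set.Ioi x, f s ∂μ)) := by
  rw [← integral_const_mul, ← integral_indicator measurableSet_Ioi]
  refine tendsto_integral_filter_of_dominated_convergence (fun s ↦ 2 * π * ‖f s‖) ?_ ?_
    (hf.norm.const_mul _) ?_
  · refine Eventually.of_forall fun ε ↦ AEStronglyMeasurable.mul ?_ hf.aestronglyMeasurable
    exact ((measurable_logJump ε).comp (measurable_id.const_sub x)).aestronglyMeasurable
  · filter_upwards [self_mem_nhdsWithin] with ε hε
    refine Eventually.of_forall fun s ↦ ?_
    rw [norm_mul]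
    gcongr
    exact norm_logJump_le (Set.mem_Ioi.1 hε).ne' (x - s)
  · filter_upwards [measure_eq_zero_iff_ae_notMem.1 hx] with s hs
    have hxs : x - s ≠ 0 := sub_ne_zero.2 (Ne.symm hs)
    simpa [Set.indicator_apply, ite_mul] using (tendsto_logJump hxs).mul_const (f s)

theorem tendsto_logPotential_sub_logPotential {x : ℝ} (hf : Integrable f μ)
    (hlog : ∀ z : ℂ, z.im ≠ 0 → Integrable (fun s : ℝ ↦ Complex.log (z - s) * f s) μ)
    (hx : μ {x} = 0) :
    Tendsto (fun ε : ℝ ↦ logPotential μ f (x + ε * Complex.I) -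
        logPotential μ f (x - ε * Complex.I))
      (𝓝[>] 0) (𝓝 (2 * π * Complex.I * ∫ s in Set.Ioi x, f s ∂μ)) := by
  refine (tendsto_integral_logJump_mul hf hx).congr' ?_
  filter_upwards [self_mem_nhdsWithin] with ε hε
  exact (logPotential_sub_logPotential x (Set.mem_Ioi.1 hε).ne' hlog).symm

end LogPotential

section Density

lemma continuous_log_one_add_sqrt : Continuous fun t : ℝ ↦ Real.log (1 + √(1 - t ^ 2)) :=
  Continuous.log (by fun_prop) fun t ↦ by positivity

lemma psiDens_of_ne_zero {t : ℝ} (ht : t ≠ 0) :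
    psiDens t = 1 / π * (Real.log (1 + √(1 - t ^ 2)) - Real.log t) := by
  rw [psiDens, Real.log_div (by positivity) (by positivity), Real.log_abs]

lemma intervalIntegrable_psiDens (a b : ℝ) : IntervalIntegrable psiDens volume a b := by
  have hlog := ((continuous_log_one_add_sqrt.intervalIntegrable (μ := volume) a b).sub
    intervalIntegral.intervalIntegrable_log').const_mul (1 / π)
  refine hlog.congr_ae (ae_restrict_of_ae ?_)
  filter_upwards [Measure.ae_ne volume (0 : ℝ)] with t ht
  exact (psiDens_of_ne_zero ht).symm

/-- A primitive of `psiDens` on `[-1, 1]`, used to compute the total mass; at `0` it is continuous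
(`t * log t` has the value `0` there) but not differentiable. -/
noncomputable def psiPrimitive (t : ℝ) : ℝ :=
  1 / π * (t * Real.log (1 + √(1 - t ^ 2)) - t * Real.log t + arcsin t)

lemma continuous_psiPrimitive : Continuous psiPrimitive :=
  continuous_const.mul (((continuous_id.mul continuous_log_one_add_sqrt).sub
    Real.continuous_mul_log).add continuous_arcsin)

lemma hasDerivAt_log_one_add_sqrt {t : ℝ} (ht : 0 < 1 - t ^ 2) :
    HasDerivAt (fun t : ℝ ↦ Real.log (1 + √(1 - t ^ 2)))
      (-(2 * t) / (2 * √(1 - t ^ 2)) / (1 + √(1 - t ^ 2))) t := by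
  have hsqrt := (((hasDerivAt_id t).pow 2).const_sub 1).sqrt ht.ne'
  simpa using (hsqrt.const_add 1).log (by positivity)

lemma hasDerivAt_psiPrimitive {t : ℝ} (ht : t ∈ Set.Ioo (-1) 1) (h0 : t ≠ 0) :
    HasDerivAt psiPrimitive (psiDens t) t := by
  have hpos : 0 < 1 - t ^ 2 := by nlinarith [ht.1, ht.2]
  have hderiv := ((((hasDerivAt_id t).mul (hasDerivAt_log_one_add_sqrt hpos)).sub
    ((hasDerivAt_id t).mul (Real.hasDerivAt_log h0))).add
    (hasDerivAt_arcsin ht.1.ne' ht.2.ne)).const_mul (1 / π)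
  refine hderiv.congr_deriv ?_
  rw [psiDens_of_ne_zero h0]
  have hr : 0 < √(1 - t ^ 2) := Real.sqrt_pos.2 hpos
  have hr_sq : t ^ 2 = 1 - √(1 - t ^ 2) ^ 2 := by rw [Real.sq_sqrt hpos.le]; ring
  simp only [id]
  generalize √(1 - t ^ 2) = r at hr hr_sq ⊢
  field_simp
  rw [hr_sq]
  ring

lemma psiPrimitive_one : psiPrimitive 1 = 1 / 2 := by
  have hval : psiPrimitive 1 = 1 / π * (π / 2) := by simp [psiPrimitive]
  rw [hval]
  field_simp

lemma psiPrimitive_neg_one : psiPrimitive (-1) = -(1 / 2) := by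
  have hval : psiPrimitive (-1) = -(1 / π * (π / 2)) := by simp [psiPrimitive]
  rw [hval]
  field_simp

lemma integral_psiDens : ∫ s in (-1 : ℝ)..1, psiDens s = 1 := by
  rw [integral_eq_of_hasDerivAt_off_countable_of_le psiPrimitive psiDens (by norm_num)
    (Set.countable_singleton 0) continuous_psiPrimitive.continuousOn
    (fun t ht ↦ hasDerivAt_psiPrimitive ht.1 ht.2) (intervalIntegrable_psiDens _ _)]
  rw [psiPrimitive_one, psiPrimitive_neg_one]
  norm_num

end Density

lemma gFun_eq_logPotential (z : ℂ) :
    gFun z = logPotential (volume.restrict (Set.Ioc (-1) 1)) (fun s ↦ psiDens s) z :=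
  intervalIntegral.integral_of_le (by norm_num)

theorem g_jump_general (x : ℝ) :
    Tendsto (fun ε : ℝ ↦ gFun (x + ε * Complex.I) - gFun (x - ε * Complex.I)) (𝓝[>] 0)
      (𝓝 (2 * π * Complex.I * ((∫ s in Set.Ioc (max (-1) x) 1, psiDens s : ℝ) : ℂ))) := by
  have hψ : IntervalIntegrable (fun s ↦ (psiDens s : ℂ)) volume (-1) 1 := by
    have h := intervalIntegrable_psiDens (-1) 1
    exact ⟨h.1.ofReal, h.2.ofReal⟩
  have hlog (z : ℂ) (hz : z.im ≠ 0) :=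
    (hψ.continuousOn_mul (continuous_log_sub_ofReal hz).continuousOn).1
  have hjump := tendsto_logPotential_sub_logPotential (x := x) hψ.1 hlog (measure_singleton x)
  simpa only [gFun_eq_logPotential, Measure.restrict_restrict measurableSet_Ioi,
    Set.inter_comm (Set.Ioi x), Set.Ioc_inter_Ioi, integral_complex_ofReal] using hjump

/-- **Lemma (jump of the `g`-function across the real axis).**
For `x ∈ (-1,1)`: `g₊(x) - g₋(x) = 2πi ∫_x^1 ψ(s) ds`; for `x < -1` the jump is `2πi`;
for `x > 1` the jump is `0`. -/
theorem g_jump (x : ℝ) :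
    (x ∈ Set.Ioo (-1 : ℝ) 1 →
      Tendsto (fun ε : ℝ => gFun (x + ε * Complex.I) - gFun (x - ε * Complex.I))
        (𝓝[>] 0) (𝓝 (2 * π * Complex.I * ((∫ s in x..1, psiDens s : ℝ) : ℂ)))) ∧
    (x < -1 →
      Tendsto (fun ε : ℝ => gFun (x + ε * Complex.I) - gFun (x - ε * Complex.I))
        (𝓝[>] 0) (𝓝 (2 * π * Complex.I))) ∧
    (1 < x →
      Tendsto (fun ε : ℝ => gFun (x + ε * Complex.I) - gFun (x - ε * Complex.I))
        (𝓝[>] 0) (𝓝 0)) := by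
  refine ⟨fun hx ↦ ?_, fun hx ↦ ?_, fun hx ↦ ?_⟩
  · simpa only [max_eq_right hx.1.le, ← intervalIntegral.integral_of_le hx.2.le]
      using g_jump_general x
  · simpa [max_eq_left hx.le, ← intervalIntegral.integral_of_le, integral_psiDens]
      using g_jump_general x
  · simpa [hx.le] using g_jump_general x
end
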